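/- Let G ≅ SL₂(2^f) with f ≥ 2. Then G has exactly four irreducible character codegrees, namely cod(G) = {1, 2^{2f} − 2^f, 2^{2f} + 2^f, 2^{2f} − 1}. -/

import Mathlib

open CategoryTheory

noncomputable def repKer {G : Type} [Group G] (V : FDRep ℂ G) : Subgroup G :=
  (Representation.asGroupHom V.ρ).ker

noncomputable def cod {G : Type} [Group G] (V : FDRep ℂ G) : ℕ :=
  (repKer V).index / Module.finrank ℂ V

noncomputable def codSet (G : Type) [Group G] : Set ℕ :=
  {n | ∃ V : FDRep ℂ G, Simple V ∧ cod V = n}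

/-! Let `q` be the order of the field, `U` the group of unipotent upper triangular matrices and
`ρ` a nontrivial irreducible representation. In characteristic two every element of the field is a
square, so the torus permutes the nontrivial characters of `U` transitively and they all have the
same multiplicity in `ρ`, which is one by Gelfand's trick for transposition across the antidiagonal.
Hence `ρ` has degree `q - 1` plus the dimension of its space of `U`-fixed vectors. If this space is
nonzero, it contains an eigenvector of the Borel subgroup, whose index is `q + 1`, so the degree is
at most `q + 1`. This leaves the degrees `q - 1`, `q` and `q + 1`.

The principal series supply the degrees `q` and `q + 1`. For `q - 1`, choose a nonzero function `φ`
on the field with sum zero which vanishes at all `a + a⁻¹`: then `g ↦ φ (tr g)` has sum zero on all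
cosets of conjugates of `U`, so it generates a subrepresentation of the regular representation
without nonzero `U`-fixed vectors. Since the group is simple, its codegrees other than `1` are the
quotients of its order by these three degrees. -/

open Representation
open scoped MonoidAlgebra MatrixGroups

section FDRep

universe u v

variable {k : Type u} [Field k] {G : Type v} [Monoid G]

lemma simple_of_isIrreducible (V : FDRep k G) [IsIrreducible V.ρ] : Simple V := by
  let F := forget₂ (FDRep k G) (Rep k G) ⋙ Rep.equivalenceModuleMonoidAlgebra.functor
  have : Simple (F.obj V) :=
    simple_iff_isSimpleModule.2 (inferInstanceAs (IsSimpleModule _ (asModule V.ρ)))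
  exact F.simple_of_simple_obj V

/-- The inclusion of a subrepresentation, as a morphism of finite-dimensional representations. -/
noncomputable def subrepresentationInclusion {V : FDRep k G} (W : Subrepresentation V.ρ) :
    FDRep.of W.toRepresentation ⟶ V :=
  ⟨InducedCategory.homMk (ModuleCat.ofHom W.toSubmodule.subtype), fun _ ↦ rfl⟩

instance {V : FDRep k G} (W : Subrepresentation V.ρ) : Mono (subrepresentationInclusion W) :=
  ConcreteCategory.mono_of_injective _ W.toSubmodule.injective_subtype

lemma isIrreducible_of_simple (V : FDRep k G) [Simple V] : IsIrreducible V.ρ := by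
  have : Nontrivial (Subrepresentation V.ρ) := by
    refine ⟨⊥, ⊤, fun h ↦ id_nonzero V ?_⟩
    ext x
    exact (h.ge (show x ∈ ⊤ from trivial) : x ∈ (⊥ : Subrepresentation V.ρ))
  refine ⟨fun W ↦ ?_⟩
  by_cases h : subrepresentationInclusion W = 0
  · left
    rw [eq_bot_iff]
    intro x hx
    have hx0 : (subrepresentationInclusion W).hom.hom.hom ⟨x, hx⟩ = 0 := by rw [h]; rfl
    exact hx0
  · right
    have := isIso_of_mono_of_nonzero h
    rw [eq_top_iff]
    intro x _
    obtain ⟨w, rfl⟩ := (ConcreteCategory.bijective_of_isIso (subrepresentationInclusion W)).2 x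
    exact w.2

lemma simple_iff_isIrreducible (V : FDRep k G) : Simple V ↔ IsIrreducible V.ρ :=
  ⟨fun _ ↦ isIrreducible_of_simple V, fun _ ↦ simple_of_isIrreducible V⟩

end FDRep

section Irreducible

variable {k G V : Type*} [Field k] [AddCommGroup V] [Module k V]

lemma nontrivial_of_isIrreducible [Monoid G] (ρ : Representation k G V) [IsIrreducible ρ] :
    Nontrivial V :=
  IsSimpleModule.nontrivial k[G] ρ.asModule

lemma span_orbit_eq_top [Monoid G] (ρ : Representation k G V) [IsIrreducible ρ] {v : V}
    (hv : v ≠ 0) : Submodule.span k (Set.range fun g ↦ ρ g v) = ⊤ := by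
  let W : Subrepresentation ρ :=
    { toSubmodule := Submodule.span k (Set.range fun g ↦ ρ g v)
      apply_mem_toSubmodule := fun g w hw ↦ by
        have hle : (Submodule.span k (Set.range fun g ↦ ρ g v)).map (ρ g) ≤
            Submodule.span k (Set.range fun g ↦ ρ g v) := by
          rw [Submodule.map_span_le]
          rintro _ ⟨h, rfl⟩
          exact Submodule.subset_span ⟨g * h, by simp⟩
        exact hle (Submodule.mem_map_of_mem hw) }
  have hvW : v ∈ W.toSubmodule := Submodule.subset_span ⟨1, by simp⟩
  have hW : W ≠ ⊥ := by
    rintro h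
    exact hv (h.le hvW : v ∈ (⊥ : Subrepresentation ρ))
  exact congrArg Subrepresentation.toSubmodule ((eq_bot_or_eq_top W).resolve_left hW)

lemma finrank_eq_one_of_forall_eq_one [Monoid G] (ρ : Representation k G V) [IsIrreducible ρ]
    (h : ∀ g, ρ g = 1) : Module.finrank k V = 1 := by
  have := nontrivial_of_isIrreducible ρ
  obtain ⟨v, hv⟩ := exists_ne (0 : V)
  rw [finrank_eq_one_iff_of_nonzero v hv, ← span_orbit_eq_top ρ hv]
  simp [h, Set.range_const]

/-- The Hecke operator `v ↦ e (ρ g v)` on the range of an endomorphism `e`. -/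
def heckeOperator [Monoid G] (ρ : Representation k G V) (e : Module.End k V) (g : G) :
    Module.End k (LinearMap.range e) :=
  e.rangeRestrict ∘ₗ ρ g ∘ₗ (LinearMap.range e).subtype

@[simp]
lemma coe_heckeOperator_apply [Monoid G] (ρ : Representation k G V) (e : Module.End k V) (g : G)
    (v : LinearMap.range e) : (heckeOperator ρ e g v : V) = e (ρ g v) :=
  rfl

lemma eq_top_of_heckeOperator_mem [Monoid G] (ρ : Representation k G V) [IsIrreducible ρ]
    {e : Module.End k V} {W : Submodule k (LinearMap.range e)} (hW : W ≠ ⊥)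
    (h : ∀ g, ∀ w ∈ W, heckeOperator ρ e g w ∈ W) : W = ⊤ := by
  obtain ⟨w, hwW, hw⟩ := Submodule.exists_mem_ne_zero_of_ne_bot hW
  have hspan := span_orbit_eq_top ρ (v := (w : V)) (by simpa using hw)
  have hle : LinearMap.range e ≤ W.map (LinearMap.range e).subtype := by
    refine (LinearMap.range_eq_map e).trans_le ?_
    rw [← hspan, Submodule.map_span_le]
    rintro _ ⟨g, rfl⟩
    exact Submodule.mem_map_of_mem (h g w hwW)
  rw [eq_top_iff]
  intro x _
  obtain ⟨y, hy, hyx⟩ := hle x.2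
  rwa [← Subtype.ext hyx]

lemma exists_heckeOperator_eq_smul_one [IsAlgClosed k] [FiniteDimensional k V] [Monoid G]
    (ρ : Representation k G V) [IsIrreducible ρ] {e : Module.End k V} (he : e ≠ 0)
    (hcomm : ∀ g h, Commute (heckeOperator ρ e g) (heckeOperator ρ e h)) (g : G) :
    ∃ c : k, heckeOperator ρ e g = c • 1 := by
  have : Nontrivial (LinearMap.range e) := by
    rwa [Submodule.nontrivial_iff_ne_bot, Ne, LinearMap.range_eq_bot]
  obtain ⟨c, hc⟩ := Module.End.exists_eigenvalue (heckeOperator ρ e g)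
  have htop : (heckeOperator ρ e g).eigenspace c = ⊤ :=
    eq_top_of_heckeOperator_mem ρ hc fun h w hw ↦ by
      rw [Module.End.mem_eigenspace_iff] at hw ⊢
      rw [← Module.End.mul_apply, hcomm g h, Module.End.mul_apply, hw, map_smul]
  refine ⟨c, LinearMap.ext fun w ↦ ?_⟩
  simpa using (Module.End.mem_eigenspace_iff.1 (htop.ge (Submodule.mem_top (x := w))))

lemma finrank_range_eq_one_of_commute_heckeOperator [IsAlgClosed k] [FiniteDimensional k V]
    [Monoid G] (ρ : Representation k G V) [IsIrreducible ρ] {e : Module.End k V} (he : e ≠ 0)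
    (hcomm : ∀ g h, Commute (heckeOperator ρ e g) (heckeOperator ρ e h)) :
    Module.finrank k (LinearMap.range e) = 1 := by
  have : Nontrivial (LinearMap.range e) := by
    rwa [Submodule.nontrivial_iff_ne_bot, Ne, LinearMap.range_eq_bot]
  obtain ⟨v, hv⟩ := exists_ne (0 : LinearMap.range e)
  rw [finrank_eq_one_iff_of_nonzero v hv]
  refine eq_top_of_heckeOperator_mem ρ (by simpa using hv) fun g w hw ↦ ?_
  obtain ⟨c, hc⟩ := exists_heckeOperator_eq_smul_one ρ he hcomm g
  rw [hc]
  exact Submodule.smul_mem _ c hw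

instance [Monoid G] [FiniteDimensional k V] (ρ : Representation k G V) :
    WellFoundedLT (Subrepresentation ρ) :=
  StrictMono.wellFoundedLT (f := Subrepresentation.toSubmodule) fun _ _ h ↦ h

lemma isIrreducible_of_isAtom [Monoid G] {ρ : Representation k G V} {U : Subrepresentation ρ}
    (hU : IsAtom U) : IsIrreducible U.toRepresentation := by
  have : Nontrivial (Subrepresentation U.toRepresentation) := by
    refine ⟨⊥, ⊤, fun h ↦ hU.1 (eq_bot_iff.2 fun x hx ↦ ?_)⟩
    have hx' : (⟨x, hx⟩ : U.toSubmodule) ∈ (⊥ : Subrepresentation U.toRepresentation) :=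
      h.ge (show _ ∈ ⊤ from trivial)
    exact congrArg Subtype.val hx'
  refine ⟨fun X ↦ ?_⟩
  let Y : Subrepresentation ρ :=
    { toSubmodule := X.toSubmodule.map U.toSubmodule.subtype
      apply_mem_toSubmodule := by
        rintro g _ ⟨x, hx, rfl⟩
        exact ⟨U.toRepresentation g x, X.apply_mem_toSubmodule g hx, rfl⟩ }
  have hYU : Y ≤ U := by
    rintro _ ⟨x, -, rfl⟩
    exact x.2
  refine (hU.le_iff.1 hYU).imp (fun hY ↦ eq_bot_iff.2 fun x hx ↦ ?_) fun hY ↦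
    eq_top_iff.2 fun x _ ↦ ?_
  · exact Subtype.ext (hY.le (Submodule.mem_map_of_mem hx))
  · obtain ⟨y, hy, hyx⟩ := hY.ge x.2
    rwa [← Subtype.ext hyx]

lemma exists_isIrreducible_le [Monoid G] [FiniteDimensional k V] {ρ : Representation k G V}
    {W : Subrepresentation ρ} (hW : W ≠ ⊥) :
    ∃ U ≤ W, IsIrreducible U.toRepresentation := by
  have : IsAtomic (Subrepresentation ρ) := isAtomic_of_orderBot_wellFounded_lt wellFounded_lt
  obtain ⟨U, hU, hUW⟩ := (eq_bot_or_exists_atom_le W).resolve_left hW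
  exact ⟨U, hUW, isIrreducible_of_isAtom hU⟩

lemma ne_bot_of_isIrreducible [Monoid G] {ρ : Representation k G V} {U : Subrepresentation ρ}
    [IsIrreducible U.toRepresentation] : U ≠ ⊥ := by
  rintro rfl
  have := nontrivial_of_isIrreducible (⊥ : Subrepresentation ρ).toRepresentation
  exact (Submodule.nontrivial_iff_ne_bot.1 this) rfl

lemma finrank_toSubmodule_sup [Monoid G] [FiniteDimensional k V] {ρ : Representation k G V}
    {X Y : Subrepresentation ρ} (h : Disjoint X Y) :
    Module.finrank k (X ⊔ Y).toSubmodule =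
      Module.finrank k X.toSubmodule + Module.finrank k Y.toSubmodule := by
  have hinf : X.toSubmodule ⊓ Y.toSubmodule = ⊥ :=
    congrArg Subrepresentation.toSubmodule h.eq_bot
  rw [← Submodule.finrank_sup_add_finrank_inf_eq, hinf, finrank_bot, add_zero]
  rfl

lemma exists_common_eigenvector [CommMonoid G] [IsAlgClosed k] [FiniteDimensional k V]
    [Nontrivial V] (ρ : Representation k G V) :
    ∃ v ≠ 0, ∀ g, ∃ c : k, ρ g v = c • v := by
  have htop : (⊤ : Subrepresentation ρ) ≠ ⊥ := fun h ↦
    top_ne_bot (congrArg Subrepresentation.toSubmodule h)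
  obtain ⟨U, -, hU⟩ := exists_isIrreducible_le htop
  have hfin := IsIrreducible.finrank_eq_one_of_isMulCommutative U.toRepresentation
  obtain ⟨v, hv, hspan⟩ := finrank_eq_one_iff'.1 hfin
  refine ⟨v, by simpa using hv, fun g ↦ ?_⟩
  obtain ⟨c, hc⟩ := hspan (U.toRepresentation g v)
  exact ⟨c, congrArg Subtype.val hc.symm⟩

end Irreducible

section CharProj

variable {k A R : Type*} [Field k] [AddCommGroup A] [Fintype A] [Ring R] [Algebra k R]

/-- The element `|A|⁻¹ ∑ x, χ(-x) σ(x)` attached to a homomorphism `σ` from a finite abelian group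
to an algebra. When `σ` is a representation it is the projection onto the `χ`-isotypic
component. -/
noncomputable def charProj (σ : AddChar A R) (χ : AddChar A k) : R :=
  (Fintype.card A : k)⁻¹ • ∑ x, χ (-x) • σ x

variable (σ : AddChar A R) (χ : AddChar A k)

lemma apply_mul_charProj (y : A) : σ y * charProj σ χ = χ y • charProj σ χ := by
  rw [charProj, mul_smul_comm, smul_comm (χ y)]
  congr 1
  rw [Finset.mul_sum, Finset.smul_sum]
  refine Fintype.sum_equiv (Equiv.addLeft y) _ _ fun x ↦ ?_
  rw [Equiv.coe_addLeft, mul_smul_comm, ← AddChar.map_add_eq_mul, smul_smul,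
    ← AddChar.map_add_eq_mul, neg_add, add_neg_cancel_left]

lemma charProj_mul_apply (y : A) : charProj σ χ * σ y = χ y • charProj σ χ := by
  rw [← apply_mul_charProj, charProj, mul_smul_comm, smul_mul_assoc, Finset.mul_sum,
    Finset.sum_mul]
  congr 1
  refine Finset.sum_congr rfl fun x _ ↦ ?_
  rw [mul_smul_comm, smul_mul_assoc, ← AddChar.map_add_eq_mul, ← AddChar.map_add_eq_mul, add_comm]

lemma charProj_mul_charProj_of_ne {χ χ' : AddChar A k} (h : χ ≠ χ') :
    charProj σ χ * charProj σ χ' = 0 := by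
  obtain ⟨y, hy⟩ := DFunLike.ne_iff.1 h
  have key : χ y • (charProj σ χ * charProj σ χ') = χ' y • (charProj σ χ * charProj σ χ') := by
    rw [← smul_mul_assoc, ← charProj_mul_apply, mul_assoc, apply_mul_charProj, mul_smul_comm]
  rw [← sub_eq_zero, ← sub_smul] at key
  exact (smul_eq_zero.1 key).resolve_left (sub_ne_zero.2 hy)

lemma charProj_mul_comm_of_semiconj {r : R} {φ : A ≃+ A} (h : ∀ x, r * σ x = σ (φ x) * r) :
    charProj σ χ * r = r * charProj σ (χ.compAddMonoidHom φ) := by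
  rw [charProj, charProj, smul_mul_assoc, mul_smul_comm, Finset.sum_mul, Finset.mul_sum,
    ← Equiv.sum_comp φ.toEquiv]
  congr 1
  refine Finset.sum_congr rfl fun x _ ↦ ?_
  simp [h, ← map_neg]

lemma isIdempotentElem_charProj [NeZero (Fintype.card A : k)] :
    IsIdempotentElem (charProj σ χ) := by
  rw [IsIdempotentElem]
  nth_rewrite 1 [charProj]
  rw [smul_mul_assoc, Finset.sum_mul]
  simp_rw [smul_mul_assoc, apply_mul_charProj, smul_smul, ← AddChar.map_add_eq_mul,
    neg_add_cancel, AddChar.map_zero_eq_one, one_smul]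
  rw [Finset.sum_const, Finset.card_univ, ← Nat.cast_smul_eq_nsmul k, smul_smul,
    inv_mul_cancel₀ (NeZero.ne _), one_smul]

lemma sum_charProj_mulShift {F : Type*} [CommRing F] [Fintype F] [NeZero (Fintype.card F : k)]
    (σ : AddChar F R) {ψ : AddChar F k} (hψ : ψ.IsPrimitive) :
    ∑ a, charProj σ (ψ.mulShift a) = 1 := by
  classical
  simp_rw [charProj, ← Finset.smul_sum]
  rw [Finset.sum_comm]
  simp_rw [AddChar.mulShift_apply, ← Finset.sum_smul, AddChar.sum_mulShift _ hψ, neg_eq_zero]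
  simp [ite_smul, smul_smul, inv_mul_cancel₀ (NeZero.ne (Fintype.card F : k))]

section Gelfand

variable {G : Type*} [Monoid G] (ρ : G →* R) (u : AddChar A G)

lemma charProj_mul_mul_charProj_mul_mul_charProj (g h : G) :
    charProj (ρ.compAddChar u) χ * ρ g * charProj (ρ.compAddChar u) χ * ρ h *
        charProj (ρ.compAddChar u) χ =
      (Fintype.card A : k)⁻¹ • ∑ x, χ (-x) •
        (charProj (ρ.compAddChar u) χ * ρ (g * u x * h) * charProj (ρ.compAddChar u) χ) := by
  generalize he : charProj (ρ.compAddChar u) χ = e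
  nth_rewrite 2 [← he]
  rw [charProj]
  simp only [smul_mul_assoc, mul_smul_comm, Finset.sum_mul, Finset.mul_sum, map_mul, mul_assoc,
    MonoidHom.coe_compAddChar, Function.comp_apply]

/-- Gelfand's trick: the antiautomorphism `τ` reverses products without changing the operators. -/
lemma commute_charProj_mul_mul_charProj [NeZero (Fintype.card A : k)] {τ : G → G}
    (hτ : ∀ g h, τ (g * h) = τ h * τ g) (hu : ∀ x, τ (u x) = u x)
    (hρ : ∀ g, charProj (ρ.compAddChar u) χ * ρ (τ g) * charProj (ρ.compAddChar u) χ =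
      charProj (ρ.compAddChar u) χ * ρ g * charProj (ρ.compAddChar u) χ) (g h : G) :
    Commute (charProj (ρ.compAddChar u) χ * ρ g * charProj (ρ.compAddChar u) χ)
      (charProj (ρ.compAddChar u) χ * ρ h * charProj (ρ.compAddChar u) χ) := by
  have expand := charProj_mul_mul_charProj_mul_mul_charProj χ ρ u
  have hidem : charProj (ρ.compAddChar u) χ * charProj (ρ.compAddChar u) χ =
    charProj (ρ.compAddChar u) χ := isIdempotentElem_charProj _ χ
  set e := charProj (ρ.compAddChar u) χ
  have hprod : ∀ g h, e * ρ g * e * (e * ρ h * e) = e * ρ g * e * ρ h * e := fun g h ↦ by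
    rw [← mul_assoc, ← mul_assoc, mul_assoc (e * ρ g), hidem]
  calc e * ρ g * e * (e * ρ h * e)
      = (Fintype.card A : k)⁻¹ • ∑ x, χ (-x) • (e * ρ (g * u x * h) * e) := by
        rw [hprod, expand]
    _ = (Fintype.card A : k)⁻¹ • ∑ x, χ (-x) • (e * ρ (τ h * u x * τ g) * e) := by
        simp_rw [← hρ (g * u _ * h), hτ, hu, mul_assoc]
    _ = e * ρ (τ h) * e * (e * ρ (τ g) * e) := by rw [hprod, expand]
    _ = e * ρ h * e * (e * ρ g * e) := by rw [hρ, hρ]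

end Gelfand

variable {V : Type*} [AddCommGroup V] [Module k V]

lemma mem_range_charProj_iff [NeZero (Fintype.card A : k)] (σ : AddChar A (Module.End k V))
    (χ : AddChar A k) {v : V} :
    v ∈ LinearMap.range (charProj σ χ) ↔ ∀ x, σ x v = χ x • v := by
  constructor
  · rintro ⟨w, rfl⟩ x
    exact LinearMap.congr_fun (apply_mul_charProj σ χ x) w
  · intro h
    refine ⟨v, ?_⟩
    simp [charProj, h, smul_smul, ← AddChar.map_add_eq_mul, ← Nat.cast_smul_eq_nsmul k,
      inv_mul_cancel₀ (NeZero.ne (Fintype.card A : k))]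

lemma finrank_eq_sum_finrank_range_charProj [CharZero k] [FiniteDimensional k V] {F : Type*}
    [CommRing F] [Fintype F] (σ : AddChar F (Module.End k V)) {ψ : AddChar F k}
    (hψ : ψ.IsPrimitive) :
    Module.finrank k V = ∑ a, Module.finrank k (LinearMap.range (charProj σ (ψ.mulShift a))) := by
  have htrace : ∀ a, LinearMap.trace k V (charProj σ (ψ.mulShift a)) =
      Module.finrank k (LinearMap.range (charProj σ (ψ.mulShift a))) := fun a ↦
    (LinearMap.IsIdempotentElem.isProj_range _ (isIdempotentElem_charProj σ _)).trace
  apply Nat.cast_injective (R := k)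
  rw [← LinearMap.trace_one, ← sum_charProj_mulShift σ hψ, map_sum, Nat.cast_sum]
  exact Finset.sum_congr rfl fun a _ ↦ htrace a

lemma commute_heckeOperator {G : Type*} [Monoid G] (ρ : Representation k G V) {e : Module.End k V}
    (he : IsIdempotentElem e) {g h : G} (hcomm : Commute (e * ρ g * e) (e * ρ h * e)) :
    Commute (heckeOperator ρ e g) (heckeOperator ρ e h) := by
  refine LinearMap.ext fun ⟨_, v, rfl⟩ ↦ Subtype.ext ?_
  have key := LinearMap.congr_fun hcomm.eq v
  have hee : ∀ w, e (e w) = e w := LinearMap.congr_fun he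
  simpa only [Module.End.mul_apply, coe_heckeOperator_apply, hee] using key

end CharProj

section SpecialLinearGroup

variable {F : Type*} [Field F]

lemma sl2_ext {g h : SL(2, F)} (h00 : g 0 0 = h 0 0) (h01 : g 0 1 = h 0 1) (h10 : g 1 0 = h 1 0)
    (h11 : g 1 1 = h 1 1) : g = h := by
  ext i j
  fin_cases i <;> fin_cases j <;> assumption

lemma sl2_det (g : SL(2, F)) : g 0 0 * g 1 1 - g 0 1 * g 1 0 = 1 := by
  rw [← Matrix.det_fin_two, g.det_coe]

/-- The unipotent upper triangular matrices, as a homomorphism from the additive group of `F`. -/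
def unipotent : AddChar F SL(2, F) where
  toFun x := ⟨!![1, x; 0, 1], by simp⟩
  map_zero_eq_one' := by apply sl2_ext <;> simp
  map_add_eq_mul' x y := Subtype.ext <| by
    change _ = !![1, x; 0, 1] * !![1, y; 0, 1]
    simp [add_comm]

/-- The diagonal matrices, as a homomorphism from the multiplicative group of `F`. -/
def torus : Fˣ →* SL(2, F) where
  toFun s := ⟨!![(s : F), 0; 0, (s⁻¹ : Fˣ)], by simp⟩
  map_one' := by apply sl2_ext <;> simp
  map_mul' s t := Subtype.ext <| by
    change _ = !![(s : F), 0; 0, (s⁻¹ : Fˣ)] * !![(t : F), 0; 0, (t⁻¹ : Fˣ)]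
    simp [mul_comm]

/-- The antidiagonal matrices, which form the nontrivial coset of the torus in its normalizer. -/
def antidiagonal (s : Fˣ) : SL(2, F) := ⟨!![0, -(s : F); (s⁻¹ : Fˣ), 0], by simp⟩

/-- Transposition across the antidiagonal, an antiautomorphism of `SL(2, F)` fixing the unipotent
and antidiagonal matrices. -/
def antitranspose (g : SL(2, F)) : SL(2, F) :=
  ⟨!![g 1 1, g 0 1; g 1 0, g 0 0], by rw [Matrix.det_fin_two_of, mul_comm]; exact sl2_det g⟩

@[simp]
lemma coe_unipotent (x : F) : (unipotent x : Matrix (Fin 2) (Fin 2) F) = !![1, x; 0, 1] := rfl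

@[simp]
lemma coe_torus (s : Fˣ) :
    (torus s : Matrix (Fin 2) (Fin 2) F) = !![(s : F), 0; 0, (s⁻¹ : Fˣ)] := rfl

@[simp]
lemma coe_antidiagonal (s : Fˣ) :
    (antidiagonal s : Matrix (Fin 2) (Fin 2) F) = !![0, -(s : F); (s⁻¹ : Fˣ), 0] := rfl

@[simp]
lemma coe_antitranspose (g : SL(2, F)) :
    (antitranspose g : Matrix (Fin 2) (Fin 2) F) = !![g 1 1, g 0 1; g 1 0, g 0 0] := rfl

lemma torus_mul_unipotent (s : Fˣ) (x : F) :
    torus s * unipotent x = unipotent ((s : F) ^ 2 * x) * torus s := by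
  apply sl2_ext <;> simp [Matrix.mul_apply, Fin.sum_univ_two]
  field_simp

lemma antidiagonal_mul_torus (s t : Fˣ) :
    antidiagonal s * torus t = antidiagonal (s * t⁻¹) := by
  apply sl2_ext <;> simp [Matrix.mul_apply, Fin.sum_univ_two, mul_comm]

lemma exists_eq_unipotent_mul_torus {g : SL(2, F)} (hg : g 1 0 = 0) :
    ∃ x s, g = unipotent x * torus s := by
  have hdet : g 0 0 * g 1 1 = 1 := by simpa [hg] using sl2_det g
  refine ⟨g 0 0 * g 0 1, ⟨g 0 0, g 1 1, hdet, mul_comm (g 0 0) _ ▸ hdet⟩, ?_⟩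
  apply sl2_ext <;> simp [Matrix.mul_apply, Fin.sum_univ_two, hg]
  linear_combination - g 0 1 * hdet

lemma exists_eq_unipotent_mul_antidiagonal_mul_unipotent {g : SL(2, F)} (hg : g 1 0 ≠ 0) :
    ∃ x s y, g = unipotent x * antidiagonal s * unipotent y := by
  refine ⟨g 0 0 / g 1 0, (Units.mk0 _ hg)⁻¹, g 1 1 / g 1 0, ?_⟩
  have hdet := sl2_det g
  apply sl2_ext <;> simp [Matrix.mul_apply, Fin.sum_univ_two] <;>
    field_simp
  linear_combination -hdet

lemma antitranspose_mul (g h : SL(2, F)) :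
    antitranspose (g * h) = antitranspose h * antitranspose g := by
  apply sl2_ext <;> simp [Matrix.mul_apply, Fin.sum_univ_two] <;> ring

lemma antitranspose_unipotent (x : F) : antitranspose (unipotent x) = unipotent x := by
  apply sl2_ext <;> simp

lemma antitranspose_antidiagonal (s : Fˣ) :
    antitranspose (antidiagonal s) = antidiagonal s := by
  apply sl2_ext <;> simp

lemma antitranspose_torus (s : Fˣ) : antitranspose (torus s) = torus s⁻¹ := by
  apply sl2_ext <;> simp

lemma ker_det_eq_range_toGL {n R : Type*} [Fintype n] [DecidableEq n] [CommRing R] :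
    (Matrix.GeneralLinearGroup.det : GL n R →* Rˣ).ker =
      (Matrix.SpecialLinearGroup.toGL : Matrix.SpecialLinearGroup n R →* GL n R).range := by
  ext g
  rw [MonoidHom.mem_ker, MonoidHom.mem_range]
  refine ⟨fun hg ↦ ⟨⟨g, congrArg Units.val hg⟩, Units.ext rfl⟩, ?_⟩
  rintro ⟨h, rfl⟩
  exact Matrix.SpecialLinearGroup.coeToGL_det h

lemma card_sl2 [Fintype F] :
    Nat.card SL(2, F) = Fintype.card F * (Fintype.card F - 1) * (Fintype.card F + 1) := by
  have hdet : Function.Surjective (Matrix.GeneralLinearGroup.det : GL (Fin 2) F →* Fˣ) := fun s ↦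
    ⟨Matrix.GeneralLinearGroup.mkOfDetNeZero !![(s : F), 0; 0, 1] (by simp), Units.ext (by
      simp [Matrix.GeneralLinearGroup.mkOfDetNeZero])⟩
  have hSL : Nat.card (Matrix.GeneralLinearGroup.det : GL (Fin 2) F →* Fˣ).ker =
      Nat.card SL(2, F) := by
    rw [ker_det_eq_range_toGL]
    exact Nat.card_congr
      (MonoidHom.ofInjective Matrix.SpecialLinearGroup.toGL_injective).symm.toEquiv
  have hGL := (Matrix.GeneralLinearGroup.det : GL (Fin 2) F →* Fˣ).ker.card_mul_index
  rw [hSL, Subgroup.index_ker, MonoidHom.range_eq_top.2 hdet, Subgroup.card_top, Nat.card_units,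
    Matrix.card_GL_field, Fin.prod_univ_two, Fin.val_zero, Fin.val_one,
    Nat.card_eq_fintype_card (α := F)] at hGL
  obtain ⟨n, hn⟩ : ∃ n, Fintype.card F = n + 2 := Nat.exists_eq_add_of_le' Fintype.one_lt_card
  have h0 : (n + 2) ^ 2 - (n + 2) ^ 0 = (n + 1) * (n + 3) := by
    rw [Nat.sub_eq_iff_eq_add (Nat.pow_le_pow_right (by lia) (by lia))]
    ring
  have h1 : (n + 2) ^ 2 - (n + 2) ^ 1 = (n + 1) * (n + 2) := by
    rw [Nat.sub_eq_iff_eq_add (Nat.pow_le_pow_right (by lia) (by lia))]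
    ring
  rw [hn, h0, h1] at hGL
  rw [hn]
  exact Nat.eq_of_mul_eq_mul_right (Nat.add_pos_right n one_pos) (hGL.trans (by
    rw [Nat.add_sub_assoc one_le_two]
    ring))

lemma center_sl2_eq_bot [CharP F 2] : Subgroup.center SL(2, F) = ⊥ := by
  rw [eq_bot_iff]
  intro g hg
  obtain ⟨r, hr, hrg⟩ := Matrix.SpecialLinearGroup.mem_center_iff.1 hg
  have hr1 : r = 1 := CharTwo.sq_inj.1 (by simpa using hr)
  rw [hr1, map_one] at hrg
  exact Subtype.ext hrg.symm

lemma isSimpleGroup_sl2 [CharP F 2] (hF : 4 ≤ Nat.card F) : IsSimpleGroup SL(2, F) := by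
  have := Matrix.ProjectiveSpecialLinearGroup.rank_two_simple hF
  let e : SL(2, F) ⧸ Subgroup.center SL(2, F) ≃* SL(2, F) :=
    (QuotientGroup.quotientMulEquivOfEq center_sl2_eq_bot).trans QuotientGroup.quotientBot
  have := e.symm.toEquiv.nontrivial
  exact IsSimpleGroup.isSimpleGroup_of_surjective (G := PSL(2, F)) e.toMonoidHom e.surjective

lemma eq_one_of_unipotent_eq_one [IsSimpleGroup SL(2, F)] {G : Type*} [Monoid G]
    {f : SL(2, F) →* G} (hf : ∀ x, f (unipotent x) = 1) : f = 1 := by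
  have hker : f.ker ≠ ⊥ := fun h ↦ by
    have h1 : unipotent (1 : F) ∈ f.ker := hf 1
    rw [h, Subgroup.mem_bot] at h1
    simpa using congrArg (fun g : SL(2, F) ↦ g 0 1) h1
  rw [← MonoidHom.ker_eq_top_iff]
  exact (f.normal_ker.eq_bot_or_eq_top).resolve_left hker

end SpecialLinearGroup

section Degrees

variable {k F V : Type*} [Field k] [Field F] [Fintype F] [AddCommGroup V] [Module k V]
  (ρ : Representation k SL(2, F) V)

/-- The projection of a representation of `SL(2, F)` onto the vectors on which the unipotent upper
triangular matrices act through the character `χ`. -/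
noncomputable def unipotentProj (χ : AddChar F k) : Module.End k V :=
  charProj (ρ.compAddChar unipotent) χ

lemma unipotentProj_mul_torus (χ : AddChar F k) (s : Fˣ) :
    unipotentProj ρ χ * ρ (torus s) =
      ρ (torus s) * unipotentProj ρ (χ.mulShift ((s : F) ^ 2)) := by
  let φ : F ≃+ F := DistribMulAction.toAddEquiv F (s ^ 2)
  have hφ : ∀ x, φ x = (s : F) ^ 2 * x := fun _ ↦ rfl
  have hχ : χ.mulShift ((s : F) ^ 2) = χ.compAddMonoidHom φ :=
    DFunLike.ext _ _ fun _ ↦ rfl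
  have h : ∀ x, ρ (torus s) * ρ.compAddChar unipotent x =
      ρ.compAddChar unipotent (φ x) * ρ (torus s) := fun x ↦ by
    rw [hφ, MonoidHom.coe_compAddChar, Function.comp_apply, Function.comp_apply, ← map_mul,
      torus_mul_unipotent, map_mul]
  rw [hχ]
  exact charProj_mul_comm_of_semiconj _ χ h

lemma unipotentProj_mul_torus_mul_unipotentProj [CharP F 2] {ψ : AddChar F k}
    (hψ : ψ.IsPrimitive) {s : Fˣ} (hs : s ≠ 1) :
    unipotentProj ρ ψ * ρ (torus s) * unipotentProj ρ ψ = 0 := by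
  have hne : ψ.mulShift ((s : F) ^ 2) ≠ ψ := fun h ↦ by
    rw [← AddChar.mulShift_one ψ, AddChar.mulShift_mulShift, one_mul] at h
    have hs2 : (s : F) ^ 2 = 1 ^ 2 := by
      rw [one_pow]
      exact AddChar.to_mulShift_inj_of_isPrimitive hψ h
    exact hs (Units.ext (CharTwo.sq_inj.1 hs2))
  rw [unipotentProj_mul_torus, mul_assoc, unipotentProj, unipotentProj,
    charProj_mul_charProj_of_ne _ hne, mul_zero]

lemma unipotentProj_mul_antitranspose_mul_unipotentProj [CharP F 2] {ψ : AddChar F k}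
    (hψ : ψ.IsPrimitive) (g : SL(2, F)) :
    unipotentProj ρ ψ * ρ (antitranspose g) * unipotentProj ρ ψ =
      unipotentProj ρ ψ * ρ g * unipotentProj ρ ψ := by
  have hl : ∀ x, unipotentProj ρ ψ * ρ (unipotent x) = ψ x • unipotentProj ρ ψ :=
    charProj_mul_apply (ρ.compAddChar unipotent) ψ
  have hr : ∀ x, ρ (unipotent x) * unipotentProj ρ ψ = ψ x • unipotentProj ρ ψ :=
    apply_mul_charProj (ρ.compAddChar unipotent) ψ
  by_cases hg : g 1 0 = 0
  · obtain ⟨x, s, rfl⟩ := exists_eq_unipotent_mul_torus hg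
    rcases eq_or_ne s 1 with rfl | hs
    · rw [map_one, mul_one, antitranspose_unipotent]
    · rw [antitranspose_mul, antitranspose_torus, antitranspose_unipotent, map_mul, map_mul,
        mul_assoc, mul_assoc (ρ _), hr, mul_smul_comm, mul_smul_comm, ← mul_assoc, ← mul_assoc, hl,
        smul_mul_assoc, smul_mul_assoc,
        unipotentProj_mul_torus_mul_unipotentProj ρ hψ hs,
        unipotentProj_mul_torus_mul_unipotentProj ρ hψ (inv_ne_one.2 hs)]
  · obtain ⟨x, s, y, rfl⟩ := exists_eq_unipotent_mul_antidiagonal_mul_unipotent hg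
    have key : ∀ x y, unipotentProj ρ ψ * ρ (unipotent x * antidiagonal s * unipotent y) *
        unipotentProj ρ ψ =
          ψ (x + y) • (unipotentProj ρ ψ * ρ (antidiagonal s) * unipotentProj ρ ψ) := fun x y ↦ by
      rw [map_mul, map_mul, ← mul_assoc, ← mul_assoc, hl, mul_assoc _ (ρ (unipotent y)), hr,
        mul_smul_comm, smul_mul_assoc, smul_mul_assoc, smul_smul, AddChar.map_add_eq_mul, mul_comm]
    rw [antitranspose_mul, antitranspose_mul, antitranspose_unipotent, antitranspose_unipotent,
      antitranspose_antidiagonal, ← mul_assoc, key, key, add_comm]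

lemma finrank_range_unipotentProj_mulShift [CharP F 2] (χ : AddChar F k) {a : F} (ha : a ≠ 0) :
    Module.finrank k (LinearMap.range (unipotentProj ρ (χ.mulShift a))) =
      Module.finrank k (LinearMap.range (unipotentProj ρ χ)) := by
  obtain ⟨b, rfl⟩ := FiniteField.isSquare_of_char_two (ringChar.eq F 2) a
  rw [← sq] at ha ⊢
  lift b to Fˣ using (isUnit_iff_ne_zero.2 (by simpa using ha))
  let t : V ≃ₗ[k] V := LinearMap.GeneralLinearGroup.generalLinearEquiv k V (asGroupHom ρ (torus b))
  have key : unipotentProj ρ χ ∘ₗ t = t ∘ₗ unipotentProj ρ (χ.mulShift ((b : F) ^ 2)) :=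
    unipotentProj_mul_torus ρ χ b
  rw [← LinearMap.range_comp_of_range_eq_top (unipotentProj ρ χ) t.range, key,
    LinearMap.range_comp, LinearEquiv.finrank_map_eq]

variable [CharZero k]

lemma isIdempotentElem_unipotentProj (χ : AddChar F k) : IsIdempotentElem (unipotentProj ρ χ) :=
  isIdempotentElem_charProj _ χ

lemma mem_range_unipotentProj_iff {χ : AddChar F k} {v : V} :
    v ∈ LinearMap.range (unipotentProj ρ χ) ↔ ∀ x, ρ (unipotent x) v = χ x • v :=
  mem_range_charProj_iff (ρ.compAddChar unipotent) χ

variable [FiniteDimensional k V]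

lemma finrank_eq_finrank_range_unipotentProj_one_add [CharP F 2] {ψ : AddChar F k}
    (hψ : ψ.IsPrimitive) :
    Module.finrank k V = Module.finrank k (LinearMap.range (unipotentProj ρ (1 : AddChar F k))) +
      (Fintype.card F - 1) * Module.finrank k (LinearMap.range (unipotentProj ρ ψ)) := by
  classical
  have hsum : Module.finrank k V =
      ∑ a, Module.finrank k (LinearMap.range (unipotentProj ρ (ψ.mulShift a))) :=
    finrank_eq_sum_finrank_range_charProj (ρ.compAddChar unipotent) hψ
  rw [hsum, ← Finset.add_sum_erase _ _ (Finset.mem_univ 0), AddChar.mulShift_zero,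
    Finset.sum_congr rfl fun a ha ↦
      finrank_range_unipotentProj_mulShift ρ ψ (Finset.ne_of_mem_erase ha)]
  simp

lemma unipotentProj_ne_zero [CharP F 2] (hF : 4 ≤ Fintype.card F) {ψ : AddChar F k}
    (hψ : ψ.IsPrimitive) (hρ : ρ ≠ 1) : unipotentProj ρ ψ ≠ 0 := by
  intro h
  have hfin := finrank_eq_finrank_range_unipotentProj_one_add ρ hψ
  rw [h, LinearMap.range_zero, finrank_bot, mul_zero, add_zero] at hfin
  have htop := Submodule.eq_top_of_finrank_eq hfin.symm
  have := isSimpleGroup_sl2 (hF.trans_eq Nat.card_eq_fintype_card.symm)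
  refine hρ (eq_one_of_unipotent_eq_one fun x ↦ LinearMap.ext fun v ↦ ?_)
  have hv : v ∈ LinearMap.range (unipotentProj ρ (1 : AddChar F k)) := htop ▸ Submodule.mem_top
  simpa using (mem_range_unipotentProj_iff ρ).1 hv x

lemma card_sub_one_le_finrank [CharP F 2] (hF : 4 ≤ Fintype.card F) {ψ : AddChar F k}
    (hψ : ψ.IsPrimitive) (hρ : ρ ≠ 1) : Fintype.card F - 1 ≤ Module.finrank k V := by
  have hpos : 0 < Module.finrank k (LinearMap.range (unipotentProj ρ ψ)) := by
    rw [Module.finrank_pos_iff, Submodule.nontrivial_iff_ne_bot, Ne, LinearMap.range_eq_bot]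
    exact unipotentProj_ne_zero ρ hF hψ hρ
  rw [finrank_eq_finrank_range_unipotentProj_one_add ρ hψ]
  exact (Nat.le_mul_of_pos_right _ hpos).trans (Nat.le_add_left _ _)

/-- Uniqueness of Whittaker models. -/
lemma finrank_range_unipotentProj_eq_one [CharP F 2] [IsAlgClosed k] [IsIrreducible ρ]
    (hF : 4 ≤ Fintype.card F) {ψ : AddChar F k} (hψ : ψ.IsPrimitive) (hρ : ρ ≠ 1) :
    Module.finrank k (LinearMap.range (unipotentProj ρ ψ)) = 1 :=
  finrank_range_eq_one_of_commute_heckeOperator ρ (unipotentProj_ne_zero ρ hF hψ hρ) fun g h ↦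
    commute_heckeOperator ρ (isIdempotentElem_unipotentProj ρ ψ) <|
      commute_charProj_mul_mul_charProj ψ ρ unipotent antitranspose_mul antitranspose_unipotent
        (unipotentProj_mul_antitranspose_mul_unipotentProj ρ hψ) g h

lemma finrank_eq_finrank_range_unipotentProj_one_add_card_sub_one [CharP F 2] [IsAlgClosed k]
    [IsIrreducible ρ] (hF : 4 ≤ Fintype.card F) {ψ : AddChar F k} (hψ : ψ.IsPrimitive)
    (hρ : ρ ≠ 1) :
    Module.finrank k V = Module.finrank k (LinearMap.range (unipotentProj ρ (1 : AddChar F k))) +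
      (Fintype.card F - 1) := by
  rw [finrank_eq_finrank_range_unipotentProj_one_add ρ hψ,
    finrank_range_unipotentProj_eq_one ρ hF hψ hρ, mul_one]

lemma exists_borel_eigenvector [IsAlgClosed k] (h : unipotentProj ρ (1 : AddChar F k) ≠ 0) :
    ∃ v ≠ 0, (∀ x, ρ (unipotent x) v = v) ∧ ∀ s, ∃ c : k, ρ (torus s) v = c • v := by
  let W : Subrepresentation (ρ.comp torus : Representation k Fˣ V) :=
    { toSubmodule := LinearMap.range (unipotentProj ρ (1 : AddChar F k))
      apply_mem_toSubmodule := by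
        rintro s _ ⟨v, rfl⟩
        refine ⟨ρ (torus s) v, ?_⟩
        have key := LinearMap.congr_fun (unipotentProj_mul_torus ρ (1 : AddChar F k) s) v
        have h1 : (1 : AddChar F k).mulShift ((s : F) ^ 2) = 1 := DFunLike.ext _ _ fun _ ↦ rfl
        rwa [h1] at key }
  have : Nontrivial W.toSubmodule := by
    rwa [Submodule.nontrivial_iff_ne_bot, Ne, LinearMap.range_eq_bot]
  obtain ⟨⟨v, hvW⟩, hv, hs⟩ := exists_common_eigenvector W.toRepresentation
  refine ⟨v, by simpa using hv, fun x ↦ ?_, fun s ↦ ?_⟩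
  · simpa using (mem_range_unipotentProj_iff ρ).1 hvW x
  · obtain ⟨c, hc⟩ := hs s
    exact ⟨c, congrArg Subtype.val hc⟩

/-- By the Bruhat decomposition the orbit of a Borel eigenvector spans a space of dimension at most
the index of the Borel subgroup. -/
lemma finrank_le_card_add_one [IsAlgClosed k] [IsIrreducible ρ]
    (h : unipotentProj ρ (1 : AddChar F k) ≠ 0) : Module.finrank k V ≤ Fintype.card F + 1 := by
  obtain ⟨v, hv, hu, ht⟩ := exists_borel_eigenvector ρ h
  let b : Option F → V := fun x ↦ x.elim v fun x ↦ ρ (unipotent x * antidiagonal 1) v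
  have hb : ∀ (c : k) x, c • b x ∈ Submodule.span k (Set.range b) := fun c x ↦
    Submodule.smul_mem _ c (Submodule.subset_span (Set.mem_range_self x))
  have hle : Submodule.span k (Set.range fun g ↦ ρ g v) ≤ Submodule.span k (Set.range b) := by
    refine Submodule.span_le.2 (Set.range_subset_iff.2 fun g ↦ ?_)
    rw [SetLike.mem_coe]
    by_cases hg : g 1 0 = 0
    · obtain ⟨x, s, rfl⟩ := exists_eq_unipotent_mul_torus hg
      obtain ⟨c, hc⟩ := ht s
      have hgv : ρ (unipotent x * torus s) v = c • b none := by
        rw [map_mul, Module.End.mul_apply, hc, map_smul, hu]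
        rfl
      exact hgv.symm ▸ hb c none
    · obtain ⟨x, s, y, rfl⟩ := exists_eq_unipotent_mul_antidiagonal_mul_unipotent hg
      obtain ⟨c, hc⟩ := ht s⁻¹
      have hs : antidiagonal s = antidiagonal 1 * torus s⁻¹ := by
        rw [antidiagonal_mul_torus, one_mul, inv_inv]
      have hgv : ρ (unipotent x * antidiagonal s * unipotent y) v = c • b (some x) := by
        rw [hs, ← mul_assoc, map_mul, map_mul, Module.End.mul_apply, Module.End.mul_apply, hu, hc,
          map_smul]
        rfl
      exact hgv.symm ▸ hb c (some x)
  rw [span_orbit_eq_top ρ hv, top_le_iff] at hle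
  calc Module.finrank k V = (Set.range b).finrank k := by rw [Set.finrank, hle, finrank_top]
    _ ≤ Fintype.card (Option F) := finrank_range_le_card b
    _ = Fintype.card F + 1 := Fintype.card_option

lemma finrank_eq_card_sub_one_or_card_or_card_add_one [CharP F 2] [IsAlgClosed k]
    [IsIrreducible ρ] (hF : 4 ≤ Fintype.card F) {ψ : AddChar F k} (hψ : ψ.IsPrimitive)
    (hρ : ρ ≠ 1) :
    Module.finrank k V = Fintype.card F - 1 ∨ Module.finrank k V = Fintype.card F ∨
      Module.finrank k V = Fintype.card F + 1 := by
  have hfin := finrank_eq_finrank_range_unipotentProj_one_add_card_sub_one ρ hF hψ hρ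
  by_cases h : unipotentProj ρ (1 : AddChar F k) = 0
  · left
    rw [hfin, h, LinearMap.range_zero, finrank_bot, zero_add]
  · have hle := finrank_le_card_add_one ρ h
    lia

end Degrees

section Invariants

variable {k G V : Type*} [Field k] [Group G] [AddCommGroup V] [Module k V]

/-- The largest subrepresentation on which the group acts trivially. -/
noncomputable def invariantsSubrepresentation (ρ : Representation k G V) : Subrepresentation ρ where
  toSubmodule := ρ.invariants
  apply_mem_toSubmodule g v hv := by rwa [hv g]

lemma toRepresentation_ne_one_of_disjoint_invariantsSubrepresentation {ρ : Representation k G V}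
    {W : Subrepresentation ρ} (hW : W ≠ ⊥) (h : Disjoint W (invariantsSubrepresentation ρ)) :
    W.toRepresentation ≠ 1 := by
  intro h1
  have hle : W ≤ invariantsSubrepresentation ρ := fun v hv g ↦
    congrArg Subtype.val (LinearMap.congr_fun (DFunLike.congr_fun h1 g) ⟨v, hv⟩)
  exact hW (h.eq_bot_of_le hle)

lemma finrank_invariants_toRepresentation {ρ : Representation k G V} (W : Subrepresentation ρ) :
    Module.finrank k W.toRepresentation.invariants =
      Module.finrank k ↥(W.toSubmodule ⊓ ρ.invariants) := by
  have hcomap : W.toRepresentation.invariants = ρ.invariants.comap W.toSubmodule.subtype := by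
    ext v
    exact forall_congr' fun g ↦ Subtype.ext_iff
  rw [hcomap, ← Submodule.map_comap_subtype, Submodule.finrank_map_subtype_eq]

end Invariants

section Constituent

universe u

variable {k V : Type u} {F : Type*} [Field k] [CharZero k] [AddCommGroup V] [Module k V]
  [FiniteDimensional k V] [Field F] [Fintype F] [CharP F 2]

/-- Two nontrivial constituents would already have total dimension at least `2 * (q - 1)`. -/
lemma exists_simple_finrank_add_finrank_invariants_eq (hF : 4 ≤ Fintype.card F)
    {ψ : AddChar F k} (hψ : ψ.IsPrimitive) (ρ : Representation k SL(2, F) V)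
    (hlt : Module.finrank k ρ.invariants < Module.finrank k V)
    (hV : Module.finrank k V < 2 * (Fintype.card F - 1) + Module.finrank k ρ.invariants) :
    ∃ U : FDRep k SL(2, F), Simple U ∧
      Module.finrank k U + Module.finrank k ρ.invariants = Module.finrank k V := by
  classical
  have : NeZero (Nat.card SL(2, F) : k) := ⟨Nat.cast_ne_zero.2 Nat.card_pos.ne'⟩
  let I := invariantsSubrepresentation ρ
  have hge : ∀ W : Subrepresentation ρ, W ≠ ⊥ → Disjoint W I →
      Fintype.card F - 1 ≤ Module.finrank k W.toSubmodule := fun W hW hWI ↦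
    card_sub_one_le_finrank W.toRepresentation hF hψ
      (toRepresentation_ne_one_of_disjoint_invariantsSubrepresentation hW hWI)
  obtain ⟨W, hIW⟩ := exists_isCompl I
  have hW : W ≠ ⊥ := by
    rintro rfl
    have htop : ρ.invariants = ⊤ :=
      congrArg Subrepresentation.toSubmodule (eq_top_of_isCompl_bot hIW)
    rw [htop, finrank_top] at hlt
    exact hlt.false
  obtain ⟨U, hUW, hU⟩ := exists_isIrreducible_le hW
  have hUI : Disjoint U I := hIW.symm.disjoint.mono_left hUW
  obtain ⟨Y, hY⟩ := exists_isCompl (U ⊔ I)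
  have hsum : Module.finrank k V = Module.finrank k U.toSubmodule +
      Module.finrank k ρ.invariants + Module.finrank k Y.toSubmodule :=
    calc Module.finrank k V = Module.finrank k (⊤ : Subrepresentation ρ).toSubmodule :=
          (finrank_top k V).symm
      _ = _ := by
        rw [← hY.sup_eq_top, finrank_toSubmodule_sup hY.disjoint, finrank_toSubmodule_sup hUI]
        rfl
  have hYbot : Y = ⊥ := by
    by_contra hY0
    have hYge := hge Y hY0 (hY.symm.disjoint.mono_right le_sup_right)
    have hUge := hge U ne_bot_of_isIrreducible hUI
    lia
  have hY0 : Module.finrank k Y.toSubmodule = 0 := by rw [hYbot]; exact finrank_bot k V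
  refine ⟨FDRep.of U.toRepresentation, (simple_iff_isIrreducible _).2 hU, ?_⟩
  rw [hsum, hY0, add_zero]

lemma exists_simple_finrank_add_finrank_inf_invariants_eq (hF : 4 ≤ Fintype.card F)
    {ψ : AddChar F k} (hψ : ψ.IsPrimitive) {ρ : Representation k SL(2, F) V}
    (W : Subrepresentation ρ)
    (hlt : Module.finrank k ↥(W.toSubmodule ⊓ ρ.invariants) < Module.finrank k W.toSubmodule)
    (hW : Module.finrank k W.toSubmodule <
      2 * (Fintype.card F - 1) + Module.finrank k ↥(W.toSubmodule ⊓ ρ.invariants)) :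
    ∃ U : FDRep k SL(2, F), Simple U ∧
      Module.finrank k U + Module.finrank k ↥(W.toSubmodule ⊓ ρ.invariants) =
        Module.finrank k W.toSubmodule := by
  rw [← finrank_invariants_toRepresentation] at hlt hW ⊢
  exact exists_simple_finrank_add_finrank_invariants_eq hF hψ W.toRepresentation hlt hW

end Constituent

section FunctionRepresentation

variable (k : Type*) [Field k]

/-- The representation of a group on the functions on a set on which the group acts, given by
`(g • h) x = h (g⁻¹ • x)`. -/
def functionRepresentation (G X : Type*) [Group G] [MulAction G X] :
    Representation k G (X → k) where
  toFun g := LinearMap.funLeft k k (g⁻¹ • ·)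
  map_one' := by ext; simp
  map_mul' g h := by ext; simp [mul_smul]

variable {k}

@[simp]
lemma functionRepresentation_apply_apply {G X : Type*} [Group G] [MulAction G X] (g : G)
    (h : X → k) (x : X) : functionRepresentation k G X g h x = h (g⁻¹ • x) := rfl

end FunctionRepresentation

section PrincipalSeries

universe u

variable {k F : Type u} [Field k] [Field F]

/-- The principal series representation of `SL(2, F)` attached to a multiplicative character `χ`,
realised on the functions on the plane which are homogeneous of degree `χ`. They vanish at the
origin because `χ 0 = 0`. -/
def principalSeries (χ : MulChar F k) :
    Subrepresentation (functionRepresentation k SL(2, F) (Fin 2 → F)) where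
  toSubmodule :=
    { carrier := {h | ∀ a v, h (a • v) = χ a * h v}
      add_mem' := fun hh hh' a v ↦ by rw [Pi.add_apply, Pi.add_apply, hh, hh', mul_add]
      zero_mem' := fun a _ ↦ (mul_zero _).symm
      smul_mem' := fun c h hh a v ↦ by rw [Pi.smul_apply, Pi.smul_apply, hh, mul_smul_comm] }
  apply_mem_toSubmodule g h hh a v := by
    rw [functionRepresentation_apply_apply, functionRepresentation_apply_apply, smul_comm]
    exact hh a _

lemma mem_principalSeries {χ : MulChar F k} {h : (Fin 2 → F) → k} :
    h ∈ (principalSeries χ).toSubmodule ↔ ∀ a v, h (a • v) = χ a * h v :=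
  Iff.rfl

lemma eq_smul_of_apply_one_eq_zero {v : Fin 2 → F} (hv : v 1 = 0) : v = v 0 • ![1, 0] := by
  ext i
  fin_cases i <;> simp [hv]

lemma eq_smul_of_apply_one_ne_zero {v : Fin 2 → F} (hv : v 1 ≠ 0) :
    v = v 1 • ![v 0 / v 1, 1] := by
  ext i
  fin_cases i <;> simp [hv, mul_div_cancel₀]

/-- A homogeneous function is determined by its values on representatives of the points of the
projective line. -/
def principalSeriesEquiv [DecidableEq F] (χ : MulChar F k) :
    (principalSeries χ).toSubmodule ≃ₗ[k] (Option F → k) where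
  toFun h x := x.elim (h.1 ![1, 0]) fun x ↦ h.1 ![x, 1]
  map_add' h h' := by ext x; cases x <;> rfl
  map_smul' c h := by ext x; cases x <;> rfl
  invFun c := ⟨fun v ↦ χ (v 1) * c (some (v 0 / v 1)) + if v 1 = 0 then χ (v 0) * c none else 0, by
    rw [mem_principalSeries]
    intro a v
    rcases eq_or_ne a 0 with rfl | ha
    · simp [MulChar.map_zero]
    · by_cases hv : v 1 = 0 <;> simp [hv, MulChar.map_zero, ha, mul_div_mul_left, mul_assoc]⟩
  left_inv h := by
    ext v
    rcases eq_or_ne (v 1) 0 with hv | hv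
    · conv_rhs => rw [eq_smul_of_apply_one_eq_zero hv, h.2]
      simp [hv, MulChar.map_zero]
    · conv_rhs => rw [eq_smul_of_apply_one_ne_zero hv, h.2]
      simp [hv]
  right_inv c := by
    ext x
    cases x <;> simp [MulChar.map_zero]

lemma finrank_principalSeries [Fintype F] (χ : MulChar F k) :
    Module.finrank k (principalSeries χ).toSubmodule = Fintype.card F + 1 := by
  classical
  rw [(principalSeriesEquiv χ).finrank_eq, Module.finrank_fintype_fun_eq_card, Fintype.card_option]

lemma exists_smul_eq_of_ne_zero {v : Fin 2 → F} (hv : v ≠ 0) : ∃ g : SL(2, F), g • ![1, 0] = v := by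
  have hcop : IsCoprime (v 0) (v 1) := by
    rw [Semifield.isCoprime_iff]
    contrapose! hv
    ext i
    fin_cases i <;> simp [hv]
  obtain ⟨g, h0, h1⟩ := hcop.exists_SL2_col 0
  refine ⟨g, ?_⟩
  ext i
  fin_cases i <;> simp [Matrix.SpecialLinearGroup.smul_def, h0, h1]

lemma apply_eq_of_mem_invariants {h : (Fin 2 → F) → k}
    (hh : h ∈ (functionRepresentation k SL(2, F) (Fin 2 → F)).invariants) {v : Fin 2 → F}
    (hv : v ≠ 0) : h v = h ![1, 0] := by
  obtain ⟨g, rfl⟩ := exists_smul_eq_of_ne_zero hv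
  have key : h (g⁻¹⁻¹ • ![1, 0]) = h ![1, 0] := congrFun (hh g⁻¹) ![1, 0]
  rwa [inv_inv] at key

lemma apply_zero_of_mem_principalSeries {χ : MulChar F k} {h : (Fin 2 → F) → k}
    (hh : h ∈ (principalSeries χ).toSubmodule) : h 0 = 0 := by
  simpa [MulChar.map_zero] using hh 0 0

lemma principalSeries_inf_invariants_eq_bot {χ : MulChar F k} (hχ : χ ≠ 1) :
    (principalSeries χ).toSubmodule ⊓
      (functionRepresentation k SL(2, F) (Fin 2 → F)).invariants = ⊥ := by
  rw [eq_bot_iff]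
  rintro h ⟨hh, hinv⟩
  obtain ⟨a, ha⟩ := MulChar.ne_one_iff.1 hχ
  have hne : (a : F) • ![(1 : F), 0] ≠ 0 := by simp
  have h10 : h ![1, 0] = 0 := by
    have key := hh a ![1, 0]
    rw [apply_eq_of_mem_invariants hinv hne, eq_comm, mul_left_eq_self₀] at key
    exact key.resolve_left ha
  ext v
  rcases eq_or_ne v 0 with rfl | hv
  · exact apply_zero_of_mem_principalSeries hh
  · exact (apply_eq_of_mem_invariants hinv hv).trans h10

lemma indicator_compl_zero_mem_principalSeries_one :
    Set.indicator {0}ᶜ 1 ∈ (principalSeries (1 : MulChar F k)).toSubmodule := by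
  intro a v
  rcases eq_or_ne a 0 with rfl | ha
  · simp [MulChar.map_zero]
  · by_cases hv : v = 0 <;> simp [ha, hv, MulChar.one_apply]

lemma indicator_compl_zero_mem_invariants :
    Set.indicator {0}ᶜ 1 ∈ (functionRepresentation k SL(2, F) (Fin 2 → F)).invariants := by
  intro g
  ext v
  by_cases hv : v = 0 <;> simp [smul_eq_zero_iff_eq, hv]

lemma principalSeries_one_inf_invariants_eq_span :
    (principalSeries (1 : MulChar F k)).toSubmodule ⊓
        (functionRepresentation k SL(2, F) (Fin 2 → F)).invariants =
      Submodule.span k {Set.indicator {0}ᶜ 1} := by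
  refine le_antisymm ?_ ((Submodule.span_singleton_le_iff_mem _ _).2
    ⟨indicator_compl_zero_mem_principalSeries_one, indicator_compl_zero_mem_invariants⟩)
  rintro h ⟨hh, hinv⟩
  refine Submodule.mem_span_singleton.2 ⟨h ![1, 0], ?_⟩
  ext v
  rcases eq_or_ne v 0 with rfl | hv
  · simp [apply_zero_of_mem_principalSeries hh]
  · simp [hv, apply_eq_of_mem_invariants hinv hv]

lemma finrank_principalSeries_one_inf_invariants :
    Module.finrank k ↥((principalSeries (1 : MulChar F k)).toSubmodule ⊓
      (functionRepresentation k SL(2, F) (Fin 2 → F)).invariants) = 1 := by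
  have hne : (Set.indicator {0}ᶜ 1 : (Fin 2 → F) → k) ≠ 0 := fun h ↦ by
    simpa using congrFun h ![1, 0]
  rw [principalSeries_one_inf_invariants_eq_span, finrank_span_singleton hne]

variable [Fintype F] [CharP F 2] [CharZero k]

lemma exists_simple_finrank_eq_card_add_one (hF : 4 ≤ Fintype.card F) {ψ : AddChar F k}
    (hψ : ψ.IsPrimitive) {χ : MulChar F k} (hχ : χ ≠ 1) :
    ∃ U : FDRep k SL(2, F), Simple U ∧ Module.finrank k U = Fintype.card F + 1 := by
  have hinv : Module.finrank k ↥((principalSeries χ).toSubmodule ⊓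
      (functionRepresentation k SL(2, F) (Fin 2 → F)).invariants) = 0 := by
    rw [principalSeries_inf_invariants_eq_bot hχ, finrank_bot]
  have hfin := finrank_principalSeries χ
  obtain ⟨U, hU, hUfin⟩ := exists_simple_finrank_add_finrank_inf_invariants_eq hF hψ
    (principalSeries χ) (by lia) (by lia)
  exact ⟨U, hU, by lia⟩

lemma exists_simple_finrank_eq_card (hF : 4 ≤ Fintype.card F) {ψ : AddChar F k}
    (hψ : ψ.IsPrimitive) :
    ∃ U : FDRep k SL(2, F), Simple U ∧ Module.finrank k U = Fintype.card F := by
  have hinv := finrank_principalSeries_one_inf_invariants (k := k) (F := F)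
  have hfin := finrank_principalSeries (1 : MulChar F k)
  obtain ⟨U, hU, hUfin⟩ := exists_simple_finrank_add_finrank_inf_invariants_eq hF hψ
    (principalSeries (1 : MulChar F k)) (by lia) (by lia)
  exact ⟨U, hU, by lia⟩

end PrincipalSeries

section Cuspidal

universe u

section

variable {k F V : Type*} [Field k] [Field F] [Fintype F] [AddCommGroup V] [Module k V]

/-- The cuspidal part of a representation of `SL(2, F)`: the largest subrepresentation without
nonzero vectors fixed by the unipotent upper triangular matrices. -/
noncomputable def cuspidalPart (ρ : Representation k SL(2, F) V) : Subrepresentation ρ where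
  toSubmodule := ⨅ g, LinearMap.ker (unipotentProj ρ (1 : AddChar F k) ∘ₗ ρ g)
  apply_mem_toSubmodule g v hv := by
    rw [Submodule.mem_iInf] at hv ⊢
    intro h
    simpa using hv (h * g)

lemma mem_cuspidalPart_iff {ρ : Representation k SL(2, F) V} {v : V} :
    v ∈ cuspidalPart ρ ↔ ∀ g, unipotentProj ρ (1 : AddChar F k) (ρ g v) = 0 :=
  Submodule.mem_iInf _

lemma unipotentProj_one_apply (ρ : Representation k SL(2, F) V) (v : V) :
    unipotentProj ρ (1 : AddChar F k) v =
      (Fintype.card F : k)⁻¹ • ∑ x, ρ (unipotent x) v := by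
  simp [unipotentProj, charProj]

lemma unipotentProj_toRepresentation_apply {ρ : Representation k SL(2, F) V}
    (U : Subrepresentation ρ) (χ : AddChar F k) (v : U.toSubmodule) :
    (unipotentProj U.toRepresentation χ v : V) = unipotentProj ρ χ v := by
  simp [unipotentProj, charProj, Subrepresentation.toRepresentation]

lemma unipotentProj_one_eq_zero_of_le_cuspidalPart {ρ : Representation k SL(2, F) V}
    {U : Subrepresentation ρ} (hU : U ≤ cuspidalPart ρ) :
    unipotentProj U.toRepresentation (1 : AddChar F k) = 0 := by
  ext v
  rw [unipotentProj_toRepresentation_apply]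
  simpa using mem_cuspidalPart_iff.1 (hU v.2) 1

lemma ne_one_of_unipotentProj_one_eq_zero [Nontrivial V] [CharZero k]
    {ρ : Representation k SL(2, F) V} (h : unipotentProj ρ (1 : AddChar F k) = 0) : ρ ≠ 1 := by
  rintro rfl
  obtain ⟨v, hv⟩ := exists_ne (0 : V)
  have hmem : v ∈ LinearMap.range (unipotentProj (1 : Representation k SL(2, F) V) 1) :=
    (mem_range_unipotentProj_iff _).2 fun x ↦ by simp
  rw [h, LinearMap.range_zero] at hmem
  exact hv hmem

end

variable {k : Type u} {F : Type*} [Field k] [CharZero k] [IsAlgClosed k] [Field F] [Fintype F]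
  [CharP F 2]

lemma exists_simple_finrank_eq_card_sub_one_of_cuspidalPart_ne_bot {V : Type u} [AddCommGroup V]
    [Module k V] [FiniteDimensional k V] (hF : 4 ≤ Fintype.card F) {ψ : AddChar F k}
    (hψ : ψ.IsPrimitive) {ρ : Representation k SL(2, F) V} (hρ : cuspidalPart ρ ≠ ⊥) :
    ∃ U : FDRep k SL(2, F), Simple U ∧ Module.finrank k U = Fintype.card F - 1 := by
  obtain ⟨U, hle, hU⟩ := exists_isIrreducible_le hρ
  have := nontrivial_of_isIrreducible U.toRepresentation
  have hzero := unipotentProj_one_eq_zero_of_le_cuspidalPart hle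
  have hfin := finrank_eq_finrank_range_unipotentProj_one_add_card_sub_one U.toRepresentation hF hψ
    (ne_one_of_unipotentProj_one_eq_zero hzero)
  rw [hzero, LinearMap.range_zero, finrank_bot, zero_add] at hfin
  exact ⟨FDRep.of U.toRepresentation, (simple_iff_isIrreducible _).2 hU, hfin⟩

end Cuspidal

section ClassFunction

lemma trace_mul_unipotent {F : Type*} [Field F] (g : SL(2, F)) (x : F) :
    Matrix.trace (g * unipotent x).1 = g 0 0 + g 1 1 + g 1 0 * x := by
  simp [Matrix.trace_fin_two, Matrix.mul_apply]
  ring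

variable {k F : Type*} [Field k] [Field F] [Fintype F]

lemma sum_trace_mul_unipotent_eq_zero {φ : F → k} (hsum : ∑ x, φ x = 0)
    (hφ : ∀ a, φ (a + a⁻¹) = 0) (g : SL(2, F)) :
    ∑ x, φ (Matrix.trace (g * unipotent x).1) = 0 := by
  simp only [trace_mul_unipotent]
  by_cases hg : g 1 0 = 0
  · obtain ⟨x, s, rfl⟩ := exists_eq_unipotent_mul_torus hg
    simp [Matrix.mul_apply, hφ]
  · let e : F ≃ F := (Equiv.mulLeft₀ _ hg).trans (Equiv.addLeft (g 0 0 + g 1 1))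
    exact (e.sum_comp φ).trans hsum

lemma trace_mem_cuspidalPart {φ : F → k} (hsum : ∑ x, φ x = 0) (hφ : ∀ a, φ (a + a⁻¹) = 0) :
    (fun g : SL(2, F) ↦ φ (Matrix.trace g.1)) ∈
      cuspidalPart (functionRepresentation k SL(2, F) SL(2, F)) := by
  rw [mem_cuspidalPart_iff]
  intro g
  ext h
  have htrace : ∀ x, Matrix.trace (g⁻¹ * ((unipotent x)⁻¹ * h)).1 =
      Matrix.trace (h * g⁻¹ * unipotent (-x)).1 := fun x ↦ by
    rw [AddChar.map_neg_eq_inv, ← mul_assoc, Matrix.SpecialLinearGroup.coe_mul,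
      Matrix.trace_mul_comm, ← Matrix.SpecialLinearGroup.coe_mul, mul_assoc]
  have key : ∑ x, φ (Matrix.trace (g⁻¹ * ((unipotent x)⁻¹ * h)).1) = 0 := by
    simp only [htrace]
    exact (Equiv.sum_comp (Equiv.neg F) fun x ↦
      φ (Matrix.trace (h * g⁻¹ * unipotent x).1)).trans
      (sum_trace_mul_unipotent_eq_zero hsum hφ (h * g⁻¹))
  rw [unipotentProj_one_apply, Pi.smul_apply, Finset.sum_apply]
  exact (congrArg _ key).trans (smul_zero _)

lemma exists_ne_add_inv_eq {F : Type*} [Field F] [CharP F 2] (a : F) :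
    ∃ b ≠ a, b + b⁻¹ = a + a⁻¹ := by
  rcases eq_or_ne a 0 with rfl | ha
  · exact ⟨1, one_ne_zero, by simp [CharTwo.add_self_eq_zero]⟩
  rcases eq_or_ne a 1 with rfl | ha1
  · exact ⟨0, zero_ne_one, by simp [CharTwo.add_self_eq_zero]⟩
  refine ⟨a⁻¹, fun h ↦ ha1 ?_, by rw [inv_inv, add_comm]⟩
  rw [← CharTwo.sq_inj, sq, one_pow]
  nth_rw 1 [← h]
  exact inv_mul_cancel₀ ha

lemma exists_ne_notMem_range_add_inv [CharP F 2] (hF : 4 ≤ Fintype.card F) :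
    ∃ s t : F, s ≠ t ∧ s ∉ Set.range (fun a : F ↦ a + a⁻¹) ∧
      t ∉ Set.range fun a : F ↦ a + a⁻¹ := by
  classical
  let T := Finset.univ.image fun a : F ↦ a + a⁻¹
  have hT : T.card * 2 ≤ Fintype.card F := by
    rw [mul_comm]
    refine Finset.mul_card_image_le_card _ 2 fun x hx ↦ Finset.one_lt_card.2 ?_
    obtain ⟨a, -, rfl⟩ := Finset.mem_image.1 hx
    obtain ⟨b, hba, hb⟩ := exists_ne_add_inv_eq a
    exact ⟨b, by simp [hb], a, by simp, hba⟩
  have hTc : 1 < Tᶜ.card := by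
    rw [Finset.card_compl]
    lia
  obtain ⟨s, hs, t, ht, hst⟩ := Finset.one_lt_card.1 hTc
  exact ⟨s, t, hst, by simpa [T] using hs, by simpa [T] using ht⟩

variable [CharP F 2]

lemma cuspidalPart_functionRepresentation_ne_bot (hF : 4 ≤ Fintype.card F) :
    cuspidalPart (functionRepresentation k SL(2, F) SL(2, F)) ≠ ⊥ := by
  classical
  obtain ⟨s, t, hst, hs, ht⟩ := exists_ne_notMem_range_add_inv hF
  let φ : F → k := Pi.single s 1 - Pi.single t 1
  have hsum : ∑ x, φ x = 0 := by simp [φ]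
  have hφ : ∀ a, φ (a + a⁻¹) = 0 := fun a ↦ by
    have hsa : a + a⁻¹ ≠ s := fun h ↦ hs ⟨a, h⟩
    have hta : a + a⁻¹ ≠ t := fun h ↦ ht ⟨a, h⟩
    simp [φ, hsa, hta]
  let g : SL(2, F) := ⟨!![s, -1; 1, 0], by simp⟩
  have hg : φ (Matrix.trace g.1) ≠ 0 := by simp [φ, g, Matrix.trace_fin_two, hst]
  intro h
  have hmem := trace_mem_cuspidalPart hsum hφ
  rw [h] at hmem
  exact hg (congrFun hmem g)

end ClassFunction

section NontrivialDegrees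

universe u

/-- The degrees of the nontrivial irreducible representations of `G` over `k`. -/
def nontrivialDegrees (k : Type u) [Field k] (G : Type*) [Group G] : Set ℕ :=
  {d | ∃ V : FDRep k G, Simple V ∧ V.ρ ≠ 1 ∧ Module.finrank k V = d}

variable {k : Type u} [Field k]

lemma mem_nontrivialDegrees_of_ne_one {G : Type*} [Group G] {V : FDRep k G} (hV : Simple V)
    (hfin : Module.finrank k V ≠ 1) : Module.finrank k V ∈ nontrivialDegrees k G := by
  have := (simple_iff_isIrreducible V).1 hV
  exact ⟨V, hV, fun h ↦ hfin (finrank_eq_one_of_forall_eq_one V.ρ (DFunLike.congr_fun h)), rfl⟩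

lemma nontrivialDegrees_sl2 [CharZero k] [IsAlgClosed k] {F : Type u} [Field F] [Fintype F]
    [CharP F 2] (hF : 4 ≤ Fintype.card F) {ψ : AddChar F k} (hψ : ψ.IsPrimitive) {χ : MulChar F k}
    (hχ : χ ≠ 1) :
    nontrivialDegrees k SL(2, F) =
      {Fintype.card F - 1, Fintype.card F, Fintype.card F + 1} := by
  refine Set.Subset.antisymm ?_ ?_
  · rintro _ ⟨V, hV, hρ, rfl⟩
    have := (simple_iff_isIrreducible V).1 hV
    exact finrank_eq_card_sub_one_or_card_or_card_add_one V.ρ hF hψ hρ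
  · have mem_of_exists {d : ℕ} (hd : d ≠ 1)
        (h : ∃ V : FDRep k SL(2, F), Simple V ∧ Module.finrank k V = d) :
        d ∈ nontrivialDegrees k SL(2, F) := by
      obtain ⟨V, hV, rfl⟩ := h
      exact mem_nontrivialDegrees_of_ne_one hV hd
    rintro _ (rfl | rfl | rfl)
    · exact mem_of_exists (by lia) (exists_simple_finrank_eq_card_sub_one_of_cuspidalPart_ne_bot
        hF hψ (cuspidalPart_functionRepresentation_ne_bot hF))
    · exact mem_of_exists (by lia) (exists_simple_finrank_eq_card hF hψ)
    · exact mem_of_exists (by lia) (exists_simple_finrank_eq_card_add_one hF hψ hχ)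

end NontrivialDegrees

section Codegree

variable {G : Type} [Group G]

lemma exists_simple_ρ_eq_one (k : Type*) [Field k] (G : Type*) [Group G] :
    ∃ V : FDRep k G, Simple V ∧ V.ρ = 1 := by
  have htop : (⊤ : Subrepresentation (trivial k G k)) ≠ ⊥ :=
    fun h ↦ one_ne_zero (h.le (show (1 : k) ∈ ⊤ from True.intro))
  obtain ⟨U, -, hU⟩ := exists_isIrreducible_le htop
  exact ⟨FDRep.of U.toRepresentation, (simple_iff_isIrreducible _).2 hU, rfl⟩

lemma mem_repKer {V : FDRep ℂ G} {g : G} : g ∈ repKer V ↔ V.ρ g = 1 := by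
  rw [repKer, MonoidHom.mem_ker, Units.ext_iff]
  rfl

lemma cod_eq_one {V : FDRep ℂ G} (hV : Simple V) (hρ : V.ρ = 1) : cod V = 1 := by
  have := (simple_iff_isIrreducible V).1 hV
  have hone : ∀ g, V.ρ g = 1 := DFunLike.congr_fun hρ
  rw [cod, (Subgroup.eq_top_iff' _).2 fun g ↦ mem_repKer.2 (hone g), Subgroup.index_top,
    finrank_eq_one_of_forall_eq_one V.ρ hone]

lemma cod_eq_card_div_finrank [IsSimpleGroup G] {V : FDRep ℂ G} (hρ : V.ρ ≠ 1) :
    cod V = Nat.card G / Module.finrank ℂ V := by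
  have hker : repKer V ≠ ⊤ := fun h ↦ hρ <| MonoidHom.ext fun g ↦
    mem_repKer.1 ((Subgroup.eq_top_iff' _).1 h g)
  have hnormal : (repKer V).Normal := MonoidHom.normal_ker _
  rw [cod, hnormal.eq_bot_or_eq_top.resolve_right hker, Subgroup.index_bot]

lemma codSet_eq_insert_image_nontrivialDegrees [IsSimpleGroup G] :
    codSet G = insert 1 ((Nat.card G / ·) '' nontrivialDegrees ℂ G) := by
  refine Set.Subset.antisymm ?_ (Set.insert_subset ?_ ?_)
  · rintro _ ⟨V, hV, rfl⟩
    by_cases hρ : V.ρ = 1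
    · exact .inl (cod_eq_one hV hρ)
    · exact .inr ⟨_, ⟨V, hV, hρ, rfl⟩, (cod_eq_card_div_finrank hρ).symm⟩
  · obtain ⟨V, hV, hρ⟩ := exists_simple_ρ_eq_one ℂ G
    exact ⟨V, hV, cod_eq_one hV hρ⟩
  · rintro _ ⟨_, ⟨V, hV, hρ, rfl⟩, rfl⟩
    exact ⟨V, hV, cod_eq_card_div_finrank hρ⟩

end Codegree

lemma exists_mulChar_ne_one {F : Type*} [Field F] [Fintype F] (hF : 3 ≤ Fintype.card F)
    (R : Type*) [CommRing R] [IsDomain R] [HasEnoughRootsOfUnity R (Monoid.exponent Fˣ)] :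
    ∃ χ : MulChar F R, χ ≠ 1 := by
  classical
  have : Nontrivial Fˣ := by
    rw [← Fintype.one_lt_card_iff_nontrivial, Fintype.card_units]
    lia
  obtain ⟨e⟩ := MulChar.mulEquiv_units F R
  have := e.toEquiv.nontrivial
  exact exists_ne 1

lemma image_div_sub_one_self_add_one {q : ℕ} (hq : 2 ≤ q) :
    (q * (q - 1) * (q + 1) / ·) '' {q - 1, q, q + 1} = {q ^ 2 - q, q ^ 2 + q, q ^ 2 - 1} := by
  have h₁ : q * (q - 1) * (q + 1) / (q - 1) = q ^ 2 + q :=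
    Nat.div_eq_of_eq_mul_left (by lia) (by ring)
  have h₂ : q * (q - 1) * (q + 1) / q = q ^ 2 - 1 := by
    rw [mul_assoc, Nat.mul_div_cancel_left _ (by lia), mul_comm, ← Nat.sq_sub_sq, one_pow]
  have h₃ : q * (q - 1) * (q + 1) / (q + 1) = q ^ 2 - q := by
    rw [Nat.mul_div_cancel _ (by lia), Nat.mul_sub_one, sq]
  rw [Set.image_insert_eq, Set.image_pair, h₁, h₂, h₃, Set.pair_comm, Set.insert_comm]

lemma ncard_insert_one_sq_sub_self {q : ℕ} (hq : 3 ≤ q) :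
    ({1, q ^ 2 - q, q ^ 2 + q, q ^ 2 - 1} : Set ℕ).ncard = 4 := by
  have hle : 3 * q ≤ q ^ 2 := by rw [sq]; gcongr
  rw [Set.ncard_insert_of_notMem, Set.ncard_insert_of_notMem, Set.ncard_pair] <;> grind

theorem stmt18_general (F : Type) [Field F] [Fintype F] [CharP F 2] (hF : 4 ≤ Fintype.card F) :
    codSet SL(2, F) = {1, Fintype.card F ^ 2 - Fintype.card F,
        Fintype.card F ^ 2 + Fintype.card F, Fintype.card F ^ 2 - 1} ∧
      (codSet SL(2, F)).ncard = 4 := by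
  have : IsSimpleGroup SL(2, F) := isSimpleGroup_sl2 (by rwa [Nat.card_eq_fintype_card])
  have hψ := AddChar.FiniteField.primitiveChar_to_Complex_isPrimitive F
  obtain ⟨χ, hχ⟩ := exists_mulChar_ne_one (F := F) (by lia) ℂ
  have hcod := codSet_eq_insert_image_nontrivialDegrees (G := SL(2, F))
  rw [nontrivialDegrees_sl2 hF hψ hχ, card_sl2,
    image_div_sub_one_self_add_one (by lia)] at hcod
  exact ⟨hcod, hcod ▸ ncard_insert_one_sq_sub_self (by lia)⟩

/-- For `G ≅ SL₂(2^f)` with `f ≥ 2`, `G` has exactly four irreducible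
character codegrees: `cod G = {1, 2^{2f} - 2^f, 2^{2f} + 2^f, 2^{2f} - 1}`. -/
theorem stmt18 (f : ℕ) (hf : 2 ≤ f) :
    codSet (Matrix.SpecialLinearGroup (Fin 2) (GaloisField 2 f)) =
        {1, 2 ^ (2 * f) - 2 ^ f, 2 ^ (2 * f) + 2 ^ f, 2 ^ (2 * f) - 1} ∧
      (codSet (Matrix.SpecialLinearGroup (Fin 2) (GaloisField 2 f))).ncard = 4 := by
  have := Fintype.ofFinite (GaloisField 2 f)
  have hcard : Fintype.card (GaloisField 2 f) = 2 ^ f := by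
    rw [← Nat.card_eq_fintype_card, GaloisField.card 2 f (by lia)]
  have h := stmt18_general (GaloisField 2 f) (hcard ▸ Nat.pow_le_pow_right two_pos hf)
  rwa [hcard, ← pow_mul'] at h
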